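/- Fix a prime p and natural numbers s and t. If there exists a surjective ring homomorphism φ from ℤ_p[[X₁,…,X_s]] (MvPowerSeries (Fin s) ℤ_p) onto ℤ_p[[X₁,…,X_t]] that is not injective, then t < s. -/

import Mathlib

/-!
If `t ≥ s`, then setting `t - s` of the variables to `0` maps
`ℤ_p[[X₁,…,X_t]]` back onto `ℤ_p[[X₁,…,X_s]]`, and composing with `φ` gives a surjective
endomorphism of the Noetherian ring `ℤ_p[[X₁,…,X_s]]`. Such an endomorphism `f` is injective:
pulling ideals back along `f` is strictly monotone, so a nonzero kernel would give an infinite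
chain `⊥ < ker f < ker f² < ⋯`.
-/

open Function

theorem injective_of_surjective_of_isNoetherianRing {R : Type*} [Ring R] [IsNoetherianRing R]
    (f : R →+* R) (hf : Surjective f) : Injective f := by
  by_contra hinj
  have bot_lt_comap : ⊥ < Ideal.comap f ⊥ := by
    rwa [bot_lt_iff_ne_bot, ← RingHom.ker_eq_comap_bot, ne_eq, ← RingHom.injective_iff_ker_eq_bot]
  have comap_strictMono : StrictMono (Ideal.comap f) :=
    (Ideal.orderEmbeddingOfSurjective f hf).strictMono
  exact not_strictMono_of_wellFoundedGT _
    (comap_strictMono.strictMono_iterate_of_lt_map bot_lt_comap)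

theorem nonempty_embedding_of_enatCard_le {σ τ : Type*} [Countable σ]
    (h : ENat.card σ ≤ ENat.card τ) : Nonempty (σ ↪ τ) := by
  rw [← Cardinal.lift_mk_le', ← Cardinal.toENat_le_iff_of_le_aleph0 (by simp)]
  simpa only [ENat.card, Cardinal.toENat_lift] using h

theorem mvPowerSeries_injective_of_surjective_of_embedding {R σ τ : Type*} [CommRing R]
    [IsNoetherianRing R] [Finite σ] (e : σ ↪ τ) (φ : MvPowerSeries σ R →+* MvPowerSeries τ R)
    (hφ : Surjective φ) : Injective φ := by
  let π : MvPowerSeries τ R →+* MvPowerSeries σ R := (MvPowerSeries.killCompl e).toRingHom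
  have hπ : Surjective π := LeftInverse.surjective MvPowerSeries.killCompl_rename_app
  have hcomp : Injective (π ∘ φ) :=
    injective_of_surjective_of_isNoetherianRing (π.comp φ) (hπ.comp hφ)
  exact hcomp.of_comp

theorem lt_of_surjective_not_injective_powerSeries_general {R σ τ : Type*} [CommRing R]
    [IsNoetherianRing R] [Finite σ] (φ : MvPowerSeries σ R →+* MvPowerSeries τ R)
    (hsurj : Surjective φ) (hinj : ¬ Injective φ) : ENat.card τ < ENat.card σ := by
  by_contra! hle
  obtain ⟨e⟩ := nonempty_embedding_of_enatCard_le hle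
  exact hinj (mvPowerSeries_injective_of_surjective_of_embedding e φ hsurj)

/-- If there is a surjective, non-injective ring homomorphism from `ℤ_p[[X₁,…,X_s]]`
onto `ℤ_p[[X₁,…,X_t]]`, then `t < s`. -/
theorem lt_of_surjective_not_injective_powerSeries (p : ℕ) [Fact p.Prime] (s t : ℕ)
    (φ : MvPowerSeries (Fin s) ℤ_[p] →+* MvPowerSeries (Fin t) ℤ_[p])
    (hsurj : Function.Surjective φ) (hinj : ¬ Function.Injective φ) : t < s := by
  simpa using lt_of_surjective_not_injective_powerSeries_general φ hsurj hinj
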